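/- Define the Ore-degree of a graph G as θ(G) = max over edges xy of d(x) + d(y). If G is a finite simple graph with 6 ≤ χ(G) = ⌊θ(G)/2⌋ + 1, then G contains K_{χ(G)} as a subgraph. -/

import Mathlib

open SimpleGraph

set_option linter.unusedSectionVars false

namespace OreBrooks

section
open scoped Classical
open Finset

variable {V : Type*} [Fintype V] {α : Type*} [Fintype α]

/-- Subgraph of edges inside the two sides of `t`. -/
def Gs (G : SimpleGraph V) (t : V → Bool) : SimpleGraph V where
  Adj a b := G.Adj a b ∧ t a = t b
  symm := ⟨fun _ _ h => ⟨h.1.symm, h.2.symm⟩⟩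
  loopless := ⟨fun _ h => G.loopless.irrefl _ h.1⟩

noncomputable def nb (G : SimpleGraph V) (t : V → Bool) (v : V) (i : Bool) : Finset V :=
  univ.filter (fun w => G.Adj v w ∧ t w = i)

lemma mem_nb {G : SimpleGraph V} {t : V → Bool} {v w : V} {i : Bool} :
    w ∈ nb G t v i ↔ G.Adj v w ∧ t w = i := by simp [nb]

noncomputable def dg (G : SimpleGraph V) (t : V → Bool) (v : V) : ℕ := (nb G t v (t v)).card

noncomputable def dd (G : SimpleGraph V) (v : V) : ℕ := (univ.filter (fun w => G.Adj v w)).card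

noncomputable def rk (side : α → Bool) (i : Bool) : ℕ := (univ.filter (fun j => side j = i)).card

def NC (G : SimpleGraph V) (α : Type*) : Prop := ∀ c : V → α, ∃ a b, G.Adj a b ∧ c a = c b

def St (G : SimpleGraph V) (side : α → Bool) (x : V) (t : V → Bool) : Prop :=
  ∃ c : V → α, (∀ a b, G.Adj a b → a ≠ x → b ≠ x → c a ≠ c b) ∧ ∀ v, v ≠ x → side (c v) = t v

lemma full {G : SimpleGraph V} (hnc : NC G α) {x : V} {c : V → α}
    (hc : ∀ a b, G.Adj a b → a ≠ x → b ≠ x → c a ≠ c b) (j : α) : ∃ w, G.Adj x w ∧ c w = j := by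
  by_contra! hcon
  obtain ⟨a, b, hab, he⟩ := hnc (Function.update c x j)
  by_cases ha : a = x
  · subst ha
    have hb : b ≠ a := hab.ne'
    simp [Function.update_of_ne hb] at he
    exact hcon b hab he.symm
  · by_cases hb : b = x
    · subst hb
      simp [Function.update_of_ne ha] at he
      exact hcon a hab.symm he
    · simp [Function.update_of_ne ha, Function.update_of_ne hb] at he
      exact hc a b hab ha hb he

lemma rk_image {G : SimpleGraph V} {side : α → Bool} (hnc : NC G α) {x : V} {t : V → Bool}
    {c : V → α}
    (hc : ∀ a b, G.Adj a b → a ≠ x → b ≠ x → c a ≠ c b) (hs : ∀ v, v ≠ x → side (c v) = t v)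
    (i : Bool) : univ.filter (fun j => side j = i) = (nb G t x i).image c := by
  ext j
  simp only [mem_filter, mem_univ, true_and, mem_image, mem_nb]
  constructor
  · intro h
    obtain ⟨w, hw, rfl⟩ := full hnc hc j
    exact ⟨w, ⟨hw, by rw [← hs w hw.ne', h]⟩, rfl⟩
  · rintro ⟨w, ⟨hw, ht⟩, rfl⟩
    rw [hs w hw.ne', ht]

lemma rk_le {G : SimpleGraph V} {side : α → Bool} (hnc : NC G α) {x : V} {t : V → Bool}
    (h : St G side x t) (i : Bool) : rk side i ≤ (nb G t x i).card := by
  obtain ⟨c, hc, hs⟩ := h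
  rw [rk, rk_image hnc hc hs]
  exact card_image_le

lemma St_swap {G : SimpleGraph V} {side : α → Bool} (hnc : NC G α) {x y : V} {t : V → Bool}
    (h : St G side x t) (ht : dg G t x = rk side (t x)) (hxy : G.Adj x y) (hy : t y = t x) :
    St G side y t := by
  obtain ⟨c, hc, hs⟩ := h
  have hinj : Set.InjOn c (nb G t x (t x)) := by
    apply injOn_of_card_image_eq
    rw [← rk_image hnc hc hs]
    exact ht.symm
  have key : ∀ b, G.Adj x b → c b = c y → b = y := by
    intro b hb he
    apply hinj _ _ he
    · simp only [mem_coe, mem_nb]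
      refine ⟨hb, ?_⟩
      rw [← hs b hb.ne', he, hs y hxy.ne', hy]
    · simp only [mem_coe, mem_nb]
      exact ⟨hxy, hy⟩
  refine ⟨Function.update c x (c y), ?_, ?_⟩
  · intro a b hab ha hb he
    by_cases hax : a = x
    · subst hax
      rw [Function.update_self, Function.update_of_ne hab.ne'] at he
      exact hb (key b hab he.symm)
    · by_cases hbx : b = x
      · subst hbx
        rw [Function.update_self, Function.update_of_ne hab.ne] at he
        exact ha (key a hab.symm he)
      · rw [Function.update_of_ne hax, Function.update_of_ne hbx] at he
        exact hc a b hab hax hbx he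
  · intro v hv
    by_cases hvx : v = x
    · subst hvx
      rw [Function.update_self, hs y hxy.ne', hy]
    · rw [Function.update_of_ne hvx, hs v hvx]

lemma nb_add (G : SimpleGraph V) (t : V → Bool) (v : V) :
    (nb G t v true).card + (nb G t v false).card = dd G v := by
  rw [dd, ← card_union_of_disjoint]
  · congr 1
    ext w
    simp only [mem_union, mem_nb, mem_filter, mem_univ, true_and]
    cases t w <;> simp
  · rw [Finset.disjoint_left]
    intro w h1 h2
    rw [mem_nb] at h1 h2
    rw [h1.2] at h2
    simp at h2

lemma nb_low {G : SimpleGraph V} {side : α → Bool} (hnc : NC G α) {x : V} {t : V → Bool}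
    (h : St G side x t) (hl : dd G x ≤ rk side true + rk side false) (i : Bool) :
    (nb G t x i).card = rk side i := by
  have h1 := rk_le hnc h true
  have h2 := rk_le hnc h false
  have h3 := nb_add G t x
  cases i <;> omega

lemma dg_low {G : SimpleGraph V} {side : α → Bool} (hnc : NC G α) {x : V} {t : V → Bool}
    (h : St G side x t) (hl : dd G x ≤ rk side true + rk side false) :
    dg G t x = rk side (t x) := nb_low hnc h hl _

/-- number of (ordered) inside edges avoiding `x` -/
noncomputable def mm (G : SimpleGraph V) (x : V) (t : V → Bool) : ℕ :=
  (univ.filter (fun p : V × V => G.Adj p.1 p.2 ∧ p.1 ≠ x ∧ p.2 ≠ x ∧ t p.1 = t p.2)).card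

noncomputable def EE (G : SimpleGraph V) (t : V → Bool) : ℕ :=
  (univ.filter (fun p : V × V => G.Adj p.1 p.2 ∧ t p.1 = t p.2)).card

lemma EE_eq (G : SimpleGraph V) (x : V) (t : V → Bool) : EE G t = mm G x t + 2 * dg G t x := by
  have e1 : univ.filter (fun p : V × V => G.Adj p.1 p.2 ∧ t p.1 = t p.2) =
      univ.filter (fun p : V × V => G.Adj p.1 p.2 ∧ p.1 ≠ x ∧ p.2 ≠ x ∧ t p.1 = t p.2) ∪
      ((nb G t x (t x)).image (fun w => (x, w)) ∪ (nb G t x (t x)).image (fun w => (w, x))) := by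
    ext ⟨a, b⟩
    simp only [mem_filter, mem_univ, true_and, mem_union, mem_image, mem_nb, Prod.mk.injEq]
    constructor
    · rintro ⟨h1, h2⟩
      by_cases ha : a = x
      · subst ha
        exact Or.inr (Or.inl ⟨b, ⟨h1, h2.symm⟩, rfl, rfl⟩)
      · by_cases hb : b = x
        · subst hb
          exact Or.inr (Or.inr ⟨a, ⟨h1.symm, h2⟩, rfl, rfl⟩)
        · exact Or.inl ⟨h1, ha, hb, h2⟩
    · rintro (⟨h1, _, _, h2⟩ | ⟨w, ⟨h1, h2⟩, rfl, rfl⟩ | ⟨w, ⟨h1, h2⟩, rfl, rfl⟩)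
      · exact ⟨h1, h2⟩
      · exact ⟨h1, h2.symm⟩
      · exact ⟨h1.symm, h2⟩
  rw [EE, e1, card_union_of_disjoint, card_union_of_disjoint, card_image_of_injective,
    card_image_of_injective]
  · rw [mm, dg]; ring
  · intro a b h; simpa using h
  · intro a b h; simpa using h
  · rw [Finset.disjoint_left]
    rintro ⟨a, b⟩ h1 h2
    simp only [mem_image, mem_nb, Prod.mk.injEq] at h1 h2
    obtain ⟨w, ⟨h1, _⟩, rfl, rfl⟩ := h1
    obtain ⟨w', ⟨h2, _⟩, rfl, rfl⟩ := h2
    exact h1.ne rfl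
  · rw [Finset.disjoint_left]
    rintro ⟨a, b⟩ h1 h2
    simp only [mem_filter, mem_univ, true_and, mem_union, mem_image, mem_nb, Prod.mk.injEq] at h1 h2
    rcases h2 with ⟨w, _, h3, _⟩ | ⟨w, _, _, h3⟩
    · exact h1.2.1 h3.symm
    · exact h1.2.2.1 h3.symm

def Good (G : SimpleGraph V) (side : α → Bool) (x : V) (t : V → Bool) : Prop :=
  St G side x t ∧ ∀ y t', St G side y t' → mm G x t ≤ mm G y t'

lemma St_congr {G : SimpleGraph V} {side : α → Bool} {x : V} {t t' : V → Bool}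
    (h : St G side x t) (he : ∀ v, v ≠ x → t' v = t v) : St G side x t' := by
  obtain ⟨c, hc, hs⟩ := h
  exact ⟨c, hc, fun v hv => by rw [hs v hv, he v hv]⟩

lemma Good_upd {G : SimpleGraph V} {side : α → Bool} {x : V} {t : V → Bool}
    (h : Good G side x t) (i : Bool) : Good G side x (Function.update t x i) := by
  refine ⟨St_congr h.1 (fun v hv => Function.update_of_ne hv _ _), ?_⟩
  have : mm G x (Function.update t x i) = mm G x t := by
    unfold mm
    congr 1
    ext ⟨a, b⟩
    simp only [mem_filter, mem_univ, true_and]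
    refine and_congr_right fun _ => and_congr_right fun ha => and_congr_right fun hb => ?_
    rw [Function.update_of_ne ha, Function.update_of_ne hb]
  rw [this]
  exact h.2

lemma Good_swap {G : SimpleGraph V} {side : α → Bool} (hnc : NC G α) {x y : V} {t : V → Bool}
    (h : Good G side x t) (ht : dg G t x = rk side (t x)) (hxy : G.Adj x y) (hy : t y = t x) :
    Good G side y t ∧ dg G t y = rk side (t y) := by
  have hs := St_swap hnc h.1 ht hxy hy
  have h1 := h.2 y t hs
  have h2 := EE_eq G x t
  have h3 := EE_eq G y t
  have h4 : rk side (t y) ≤ dg G t y := rk_le hnc hs (t y)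
  rw [← hy] at ht
  have h5 : mm G y t = mm G x t := by omega
  exact ⟨⟨hs, fun z t' hz => h5 ▸ h.2 z t' hz⟩, by omega⟩

lemma t_reach {G : SimpleGraph V} {t : V → Bool} {x v : V} (h : (Gs G t).Reachable x v) :
    t v = t x := by
  rw [SimpleGraph.reachable_iff_reflTransGen] at h
  induction h with
  | refl => rfl
  | tail _ h ih => rw [← h.2, ih]

lemma Good_reach {G : SimpleGraph V} {side : α → Bool} (hnc : NC G α) {x v : V} {t : V → Bool}
    (h : Good G side x t) (ht : dg G t x = rk side (t x)) (hr : (Gs G t).Reachable x v) :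
    Good G side v t ∧ dg G t v = rk side (t v) := by
  rw [SimpleGraph.reachable_iff_reflTransGen] at hr
  induction hr with
  | refl => exact ⟨h, ht⟩
  | tail _ h ih => exact Good_swap hnc ih.1 ih.2 h.1 h.2.symm

/-- version where all degrees are small -/
lemma St_reach {G : SimpleGraph V} {side : α → Bool} (hnc : NC G α) {x v : V} {t : V → Bool}
    (hl : ∀ v, dd G v ≤ rk side true + rk side false)
    (h : St G side x t) (hr : (Gs G t).Reachable x v) :
    dg G t v = rk side (t v) := by
  have : St G side v t := by
    rw [SimpleGraph.reachable_iff_reflTransGen] at hr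
    induction hr with
    | refl => exact h
    | tail _ h ih => exact St_swap hnc ih (dg_low hnc ih (hl _)) h.1 h.2.symm
  exact dg_low hnc this (hl _)

/-- Parity: a set of even-degree vertices has an even boundary. -/
lemma parity (K : SimpleGraph V) (X : Set V) (hX : ∀ v ∈ X, Even (dd K v)) :
    Even (univ.filter (fun p : V × V => p.1 ∈ X ∧ p.2 ∉ X ∧ K.Adj p.1 p.2)).card := by
  let K' : SimpleGraph V :=
    { Adj := fun a b => K.Adj a b ∧ a ∈ X ∧ b ∈ X
      symm := ⟨fun _ _ h => ⟨h.1.symm, h.2.2, h.2.1⟩⟩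
      loopless := ⟨fun _ h => K.loopless.irrefl _ h.1⟩ }
  have e0 : (univ.filter (fun p : V × V => p.1 ∈ X ∧ p.2 ∈ X ∧ K.Adj p.1 p.2)).card
      = ∑ v, K'.degree v := by
    rw [card_filter, ← univ_product_univ, sum_product]
    refine sum_congr rfl fun v _ => ?_
    rw [← card_filter, ← K'.card_neighborFinset_eq_degree]
    congr 1
    ext w
    simp [K']
    tauto
  have e1 : (univ.filter (fun p : V × V => p.1 ∈ X ∧ K.Adj p.1 p.2)).card
      = ∑ v ∈ univ.filter (· ∈ X), dd K v := by
    rw [card_filter, ← univ_product_univ, sum_product, sum_filter]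
    refine sum_congr rfl fun v _ => ?_
    rw [← card_filter, dd]
    by_cases hv : v ∈ X <;> simp [hv]
  have e2 : (univ.filter (fun p : V × V => p.1 ∈ X ∧ K.Adj p.1 p.2)).card =
     (univ.filter (fun p : V × V => p.1 ∈ X ∧ p.2 ∈ X ∧ K.Adj p.1 p.2)).card +
     (univ.filter (fun p : V × V => p.1 ∈ X ∧ p.2 ∉ X ∧ K.Adj p.1 p.2)).card := by
    rw [← card_union_of_disjoint]
    · congr 1
      ext p
      simp only [mem_filter, mem_univ, true_and, mem_union]
      tauto
    · rw [Finset.disjoint_left]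
      intro p h1 h2
      simp only [mem_filter, mem_univ, true_and] at h1 h2
      tauto
  have e3 : Even (∑ v ∈ univ.filter (· ∈ X), dd K v) :=
    even_sum _ fun v hv => hX v (by simpa using hv)
  rw [← e1, e2, e0, K'.sum_degrees_eq_twice_card_edges] at e3
  exact (Nat.even_add.1 e3).1 (even_two_mul _)

end

end OreBrooks


open SimpleGraph
set_option linter.unusedSectionVars false

namespace OreBrooks

section
open scoped Classical
open Finset

variable {V : Type*} [Fintype V] {β : Type*} [Fintype β]

lemma dd_Gs (G : SimpleGraph V) (t : V → Bool) (v : V) : dd (Gs G t) v = dg G t v := by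
  unfold dd dg nb Gs
  congr 1
  ext w
  simp only [mem_filter, mem_univ, true_and]
  exact and_congr_right fun _ => eq_comm

lemma parity' (K : SimpleGraph V) (X : Set V) (hX : ∀ v ∈ X, Even (dd K v))
    (S : Finset (V × V)) (hS : ∀ a b, (a ∈ X ∧ b ∉ X ∧ K.Adj a b) ↔ (a, b) ∈ S) :
    Even S.card := by
  have := parity K X hX
  convert this using 2
  ext ⟨a, b⟩
  rw [← hS]
  simp

noncomputable def tt (x : V) (c : V → β) (i j : β) : V → Bool :=
  fun v => decide (v = x ∨ c v = i ∨ c v = j)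

lemma tt_true {x : V} {c : V → β} {i j : β} {v : V} :
    tt x c i j v = true ↔ (v = x ∨ c v = i ∨ c v = j) := by simp [tt]

lemma br_deg {H : SimpleGraph V} (hnc : NC H β) (hl : ∀ v, dd H v ≤ Fintype.card β) {x : V}
    {c : V → β} (hc : ∀ a b, H.Adj a b → a ≠ x → b ≠ x → c a ≠ c b) {i j : β} (hij : i ≠ j)
    {v : V} (hv : (Gs H (tt x c i j)).Reachable x v) : (nb H (tt x c i j) v true).card = 2 := by
  let side : β → Bool := fun b => decide (b = i ∨ b = j)
  have h2 : rk side true = 2 := by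
    have : (univ.filter (fun b => side b = true)) = {i, j} := by
      ext b; simp [side]
    rw [rk, this, card_pair hij]
  have h3 : rk side true + rk side false = Fintype.card β := by
    rw [rk, rk, ← card_union_of_disjoint]
    · rw [← card_univ]
      congr 1
      ext b
      cases h : side b <;> simp [h]
    · rw [Finset.disjoint_left]
      intro b h1 h2
      simp only [mem_filter, mem_univ, true_and] at h1 h2
      rw [h1] at h2
      simp at h2
  have hst : St H side x (tt x c i j) := ⟨c, hc, fun v hv => by simp [tt, side, hv]⟩
  have := St_reach hnc (by rw [h3]; exact hl) hst hv
  have ht : tt x c i j v = true := by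
    rw [t_reach hv]; simp [tt]
  rw [dg, ht, h2] at this
  exact this

lemma br_uniq {H : SimpleGraph V} (hnc : NC H β) (hl : ∀ v, dd H v ≤ Fintype.card β) {x : V}
    {c : V → β} (hc : ∀ a b, H.Adj a b → a ≠ x → b ≠ x → c a ≠ c b) {a b : V}
    (ha : H.Adj x a) (hb : H.Adj x b) (h : c a = c b) : a = b := by
  have himg : (univ.filter (fun w => H.Adj x w)).image c = univ := by
    ext j
    simp only [mem_image, mem_filter, mem_univ, true_and, iff_true]
    exact full hnc hc j
  have hinj : Set.InjOn c (univ.filter (fun w => H.Adj x w)) := by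
    apply injOn_of_card_image_eq
    apply le_antisymm card_image_le
    rw [himg, card_univ]
    exact hl x
  exact hinj (by simpa using ha) (by simpa using hb) h

lemma br_inter {H : SimpleGraph V} (hnc : NC H β) (hl : ∀ v, dd H v ≤ Fintype.card β) {x : V}
    {c : V → β} (hc : ∀ a b, H.Adj a b → a ≠ x → b ≠ x → c a ≠ c b) {i j k : β} (hij : i ≠ j)
    (hik : i ≠ k) (hjk : j ≠ k) {w : V} (hwx : w ≠ x)
    (h1 : (Gs H (tt x c i j)).Reachable x w) (h2 : (Gs H (tt x c i k)).Reachable x w) :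
    H.Adj x w ∧ c w = i := by
  have hci : c w = i := by
    have e1 : tt x c i j w = true := by rw [t_reach h1]; simp [tt]
    have e2 : tt x c i k w = true := by rw [t_reach h2]; simp [tt]
    rw [tt_true] at e1 e2
    grind
  refine ⟨?_, hci⟩
  by_contra hna
  have two : ∀ j', i ≠ j' → (Gs H (tt x c i j')).Reachable x w →
      2 ≤ (univ.filter (fun a => H.Adj w a ∧ c a = j')).card := by
    intro j' hj' hr
    rw [← br_deg hnc hl hc hj' hr]
    apply card_le_card
    intro a ha
    rw [mem_nb, tt_true] at ha
    simp only [mem_filter, mem_univ, true_and]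
    refine ⟨ha.1, ?_⟩
    have hax : a ≠ x := fun h => hna (h ▸ ha.1.symm)
    have := hc w a ha.1 hwx hax
    grind
  have tj := two j hij h1
  have tk := two k hik h2
  have hmiss : ∃ l, l ≠ i ∧ ∀ a, H.Adj w a → c a ≠ l := by
    by_contra! hcon
    have e1 : dd H w = ∑ l, (univ.filter (fun a => H.Adj w a ∧ c a = l)).card := by
      rw [dd, card_eq_sum_card_fiberwise (f := c) (t := univ) (fun _ _ => by simp)]
      refine sum_congr rfl fun l _ => ?_
      rw [filter_filter]
    have e2 : ∀ l, 1 + (if l = j then 1 else 0) + (if l = k then 1 else 0) ≤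
        (univ.filter (fun a => H.Adj w a ∧ c a = l)).card + (if l = i then 1 else 0) := by
      intro l
      by_cases hli : l = i
      · subst hli; simp [hij, hik]
      · have : 1 ≤ (univ.filter (fun a => H.Adj w a ∧ c a = l)).card := by
          obtain ⟨a, ha, hal⟩ := hcon l hli
          exact card_pos.2 ⟨a, by simp [ha, hal]⟩
        by_cases hlj : l = j
        · subst hlj; simp [hjk]; omega
        · by_cases hlk : l = k
          · subst hlk; simp [hlj]; omega
          · simp [hlj, hlk]; omega
    have e3 := sum_le_sum (s := univ) fun l _ => e2 l
    rw [sum_add_distrib, sum_add_distrib, sum_add_distrib, ← e1] at e3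
    simp at e3
    have := hl w
    omega
  obtain ⟨l, hli, hlw⟩ := hmiss
  have hlj : l ≠ j := by
    rintro rfl
    obtain ⟨a, ha⟩ := card_pos.1 (show 0 < _ by omega : 0 < (univ.filter (fun a => H.Adj w a ∧ c a = l)).card)
    simp only [mem_filter, mem_univ, true_and] at ha
    exact hlw a ha.1 ha.2
  let c' := Function.update c w l
  have hc' : ∀ a b, H.Adj a b → a ≠ x → b ≠ x → c' a ≠ c' b := by
    intro a b hab ha hb he
    by_cases haw : a = w
    · subst haw
      simp only [c', Function.update_self, Function.update_of_ne hab.ne'] at he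
      exact hlw b hab he.symm
    · by_cases hbw : b = w
      · subst hbw
        simp only [c', Function.update_self, Function.update_of_ne hab.ne] at he
        exact hlw a hab.symm he
      · simp only [c', Function.update_of_ne haw, Function.update_of_ne hbw] at he
        exact hc a b hab ha hb he
  have hw' : tt x c' i j w = false := by simp [tt, c', hwx, hli, hlj]
  have hsub : ∀ v, tt x c' i j v = true → tt x c i j v = true := by
    intro v hv
    by_cases hvw : v = w
    · subst hvw; rw [hw'] at hv; simp at hv
    · simpa [tt, c', Function.update_of_ne hvw] using hv
  have hall : ∀ v, (Gs H (tt x c i j)).Reachable x v → (Gs H (tt x c' i j)).Reachable x v := by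
    intro v hv
    have hv2 := hv
    rw [SimpleGraph.reachable_iff_reflTransGen] at hv2
    induction hv2 with
    | refl => exact Reachable.refl _
    | @tail a b hxa hab ih =>
      rw [← SimpleGraph.reachable_iff_reflTransGen] at hxa
      have ih := ih hxa
      have d1 := br_deg hnc hl hc hij hxa
      have d2 := br_deg hnc hl hc' hij ih
      have hss : nb H (tt x c' i j) a true ⊆ nb H (tt x c i j) a true := by
        intro v hv
        rw [mem_nb] at hv ⊢
        exact ⟨hv.1, hsub v hv.2⟩
      have heq := eq_of_subset_of_card_le hss (by omega)
      have ta : tt x c i j a = true := by rw [t_reach hxa]; simp [tt]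
      have ta' : tt x c' i j a = true := by rw [t_reach ih]; simp [tt]
      have hb : b ∈ nb H (tt x c' i j) a true := by
        rw [heq, mem_nb]
        exact ⟨hab.1, by rw [← hab.2, ta]⟩
      rw [mem_nb] at hb
      exact ih.trans (Adj.reachable (show (Gs H (tt x c' i j)).Adj a b from
        ⟨hb.1, by rw [ta', hb.2]⟩))
  have := t_reach (hall w h1)
  rw [hw'] at this
  simp [tt] at this

lemma brooks {H : SimpleGraph V} (hnc : NC H β) (hl : ∀ v, dd H v ≤ Fintype.card β)
    (h3 : 3 ≤ Fintype.card β) {x : V}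
    {c : V → β} (hc : ∀ a b, H.Adj a b → a ≠ x → b ≠ x → c a ≠ c b) {v1 v2 : V}
    (hv1 : H.Adj x v1) (hv2 : H.Adj x v2) (hne : v1 ≠ v2) : H.Adj v1 v2 := by
  by_contra hna
  have h12 : c v1 ≠ c v2 := fun h => hne (br_uniq hnc hl hc hv1 hv2 h)
  obtain ⟨k, hk1, hk2⟩ : ∃ k, c v1 ≠ k ∧ c v2 ≠ k := by
    by_contra! hcon
    have : (univ : Finset β) ⊆ {c v1, c v2} := by
      intro k _
      have := hcon k
      simp only [mem_insert, mem_singleton]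
      grind
    have := card_le_card this
    rw [card_univ] at this
    have := card_le_two (a := c v1) (b := c v2)
    omega
  set i := c v1 with hi
  set j := c v2 with hj
  obtain ⟨v3, hv3, hc3⟩ := full hnc hc k
  -- the second neighbour `u` of `v1` on the chain `i j`
  have r1 : (Gs H (tt x c i j)).Reachable x v1 :=
    Adj.reachable ⟨hv1, by simp [tt, hi]⟩
  have r1k : (Gs H (tt x c i k)).Reachable x v1 :=
    Adj.reachable ⟨hv1, by simp [tt, hi]⟩
  have d1 := br_deg hnc hl hc h12 r1
  have hxn : x ∈ nb H (tt x c i j) v1 true := by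
    rw [mem_nb]; exact ⟨hv1.symm, by simp [tt]⟩
  obtain ⟨u, hu⟩ := card_eq_one.1 (by rw [card_erase_of_mem hxn, d1] :
    ((nb H (tt x c i j) v1 true).erase x).card = 1)
  have hu' : ∀ a, (a ≠ x ∧ H.Adj v1 a ∧ (a = x ∨ c a = i ∨ c a = j)) ↔ a = u := by
    intro a
    rw [← @mem_singleton _ u, ← hu, mem_erase, mem_nb, tt_true]
  obtain ⟨hux, hvu, hcu⟩ := (hu' u).2 rfl
  have hcu : c u = j := by
    have := hc v1 u hvu hv1.ne' hux
    grind
  have huv2 : u ≠ v2 := fun h => hna (h ▸ hvu)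
  -- swap colours on the chain `i k`
  let O : Set V := {v | (Gs H (tt x c i k)).Reachable x v ∧ v ≠ x}
  have hOc : ∀ v ∈ O, c v = i ∨ c v = k := by
    intro v hv
    have : tt x c i k v = true := by rw [t_reach hv.1]; simp [tt]
    rw [tt_true] at this
    exact this.resolve_left hv.2
  have hOcl : ∀ a b, H.Adj a b → a ∈ O → b ≠ x → (c b = i ∨ c b = k) → b ∈ O := by
    intro a b hab ha hb hcb
    refine ⟨ha.1.trans (Adj.reachable ⟨hab, ?_⟩), hb⟩
    have e1 : tt x c i k a = true := tt_true.2 (Or.inr (hOc a ha))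
    have e2 : tt x c i k b = true := tt_true.2 (Or.inr hcb)
    rw [e1, e2]
  let c' : V → β := fun v => if v ∈ O then Equiv.swap i k (c v) else c v
  have hc'O : ∀ v ∈ O, c' v = Equiv.swap i k (c v) := fun v hv => by simp [c', hv]
  have hc'n : ∀ v, v ∉ O → c' v = c v := fun v hv => by simp [c', hv]
  have hc' : ∀ a b, H.Adj a b → a ≠ x → b ≠ x → c' a ≠ c' b := by
    have aux : ∀ a b, H.Adj a b → b ≠ x → a ∈ O → b ∉ O → c' a ≠ c' b := by
      intro a b hab hb haO hbO
      rw [hc'O a haO, hc'n b hbO]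
      intro he
      apply hbO
      refine hOcl a b hab haO hb ?_
      rcases hOc a haO with h | h
      · rw [h, Equiv.swap_apply_left] at he; exact Or.inr he.symm
      · rw [h, Equiv.swap_apply_right] at he; exact Or.inl he.symm
    intro a b hab ha hb
    by_cases haO : a ∈ O
    · by_cases hbO : b ∈ O
      · rw [hc'O a haO, hc'O b hbO]
        exact fun h => hc a b hab ha hb ((Equiv.swap i k).injective h)
      · exact aux a b hab hb haO hbO
    · by_cases hbO : b ∈ O
      · exact (aux b a hab.symm ha hbO haO).symm
      · rw [hc'n a haO, hc'n b hbO]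
        exact hc a b hab ha hb
  have hjO : ∀ v, c v = j → v ∉ O := by
    intro v hv hvO
    rcases hOc v hvO with h | h
    · exact h12 (h.symm.trans hv)
    · exact hk2 (hv.symm.trans h)
  have c'v1 : c' v1 = k := by
    rw [hc'O v1 ⟨r1k, hv1.ne'⟩, ← hi, Equiv.swap_apply_left]
  have c'v2 : c' v2 = j := hc'n v2 (hjO v2 rfl)
  have c'u : c' u = j := by rw [hc'n u (hjO u hcu), hcu]
  have ru1 : (Gs H (tt x c' j k)).Reachable x u := by
    have e1 : (Gs H (tt x c' j k)).Adj x v1 := ⟨hv1, by simp [tt, c'v1]⟩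
    have e2 : (Gs H (tt x c' j k)).Adj v1 u := ⟨hvu, by simp [tt, c'v1, c'u]⟩
    exact e1.reachable.trans e2.reachable
  have ru2 : (Gs H (tt x c' j i)).Reachable x u := by
    by_contra hnu
    let X : Set V := {v | (Gs H (tt x c i j)).Reachable x v ∧ v ≠ x ∧ v ≠ v1 ∧
      (Gs H (tt x c' j i)).Reachable x v}
    have hpar := parity' (Gs H (tt x c i j)) X (by
      intro v hv
      have ht : tt x c i j v = true := by rw [t_reach hv.1]; simp [tt]
      rw [dd_Gs, dg, ht, br_deg hnc hl hc h12 hv.1]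
      exact even_two) {(v2, x)} (by
      intro a b
      simp only [mem_singleton, Prod.mk.injEq]
      constructor
      · rintro ⟨⟨ha1, ha2, ha3, ha4⟩, hbX, hab⟩
        have hta : tt x c i j a = true := by rw [t_reach ha1]; simp [tt]
        have htb : tt x c i j b = true := by rw [← hab.2, hta]
        have hta' := tt_true.1 hta
        have htb' := tt_true.1 htb
        by_cases hbx : b = x
        · refine ⟨?_, hbx⟩
          subst hbx
          rcases hta' with h | h | h
          · exact absurd h ha2
          · exact absurd (br_uniq hnc hl hc hab.1.symm hv1 h) ha3
          · exact br_uniq hnc hl hc hab.1.symm hv2 h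
        · exfalso
          by_cases hbv : b = v1
          · subst hbv
            have := (hu' a).1 ⟨ha2, hab.1.symm, hta'⟩
            exact hnu (this ▸ ha4)
          · have hbr : (Gs H (tt x c i j)).Reachable x b := ha1.trans hab.reachable
            apply hbX
            refine ⟨hbr, hbx, hbv, ?_⟩
            have nO : ∀ v, (Gs H (tt x c i j)).Reachable x v → v ≠ x → v ≠ v1 → v ∉ O := by
              intro v h1 h2 h3 hvO
              have := br_inter hnc hl hc h12 hk1 hk2 h2 h1 hvO.1
              exact h3 (br_uniq hnc hl hc this.1 hv1 this.2)
            refine ha4.trans (Adj.reachable ⟨hab.1, ?_⟩)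
            have e1 : tt x c' j i a = true := by
              rw [tt_true, hc'n a (nO a ha1 ha2 ha3)]; tauto
            have e2 : tt x c' j i b = true := by
              rw [tt_true, hc'n b (nO b hbr hbx hbv)]; tauto
            rw [e1, e2]
      · rintro ⟨rfl, rfl⟩
        refine ⟨⟨Adj.reachable ⟨hv2, by simp [tt, ← hj]⟩, hv2.ne', hne.symm,
          Adj.reachable ⟨hv2, by simp [tt, c'v2]⟩⟩, fun h => h.2.1 rfl, hv2.symm,
          by simp [tt, ← hj]⟩)
    simp at hpar
  have := br_inter hnc hl hc' hk2 h12.symm hk1.symm hux ru1 ru2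
  exact huv2 (br_uniq hnc hl hc' this.1 hv2 (by rw [this.2, c'v2]))

end

end OreBrooks


open SimpleGraph
set_option linter.unusedSectionVars false

namespace OreBrooks

section
open scoped Classical
open Finset

variable {V : Type*} [Fintype V] {α : Type*} [Fintype α]

def Low (G : SimpleGraph V) (side : α → Bool) (v : V) : Prop :=
  dd G v ≤ rk side true + rk side false

structure Ctx (G : SimpleGraph V) (side : α → Bool) : Prop where
  nc : NC G α
  r1 : rk side false = 2
  r2 : 3 ≤ rk side true
  ind : ∀ a b, G.Adj a b → Low G side a ∨ Low G side b
  bd : ∀ v, dd G v ≤ rk side true + 3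

abbrev Cn (G : SimpleGraph V) (t : V → Bool) (a b : V) : Prop := (Gs G t).Reachable a b

lemma Cn_adj {G : SimpleGraph V} {t : V → Bool} {a b : V} (h : G.Adj a b) (ht : t a = t b) :
    Cn G t a b := Adj.reachable (show (Gs G t).Adj a b from ⟨h, ht⟩)

lemma Cn_mono {G : SimpleGraph V} {t t' : V → Bool} {a b : V} (h : Cn G t a b)
    (hm : ∀ u v, Cn G t a u → G.Adj u v → t u = t v → t' u = t' v) : Cn G t' a b := by
  have h2 := h
  rw [Cn, SimpleGraph.reachable_iff_reflTransGen] at h2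
  induction h2 with
  | refl => exact Reachable.refl _
  | @tail u v hau huv ih =>
    rw [← SimpleGraph.reachable_iff_reflTransGen] at hau
    exact (ih hau).trans (Cn_adj huv.1 (hm u v hau huv.1 huv.2))

lemma Cn_closed {G : SimpleGraph V} {t : V → Bool} {a b : V} (h : Cn G t a b)
    (X : Set V) (ha : a ∈ X) (hX : ∀ u v, u ∈ X → G.Adj u v → t u = t v → v ∈ X) : b ∈ X := by
  rw [Cn, SimpleGraph.reachable_iff_reflTransGen] at h
  induction h with
  | refl => exact ha
  | @tail u v hau huv ih => exact hX u v ih huv.1 huv.2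

lemma noncol_comp {G : SimpleGraph V} {side : α → Bool} (hnc : NC G α) {x : V} {t : V → Bool}
    (h : St G side x t) (c' : V → α) (hc' : ∀ v, Cn G t x v → side (c' v) = t x) :
    ∃ a b, Cn G t x a ∧ Cn G t x b ∧ G.Adj a b ∧ c' a = c' b := by
  obtain ⟨c, hc, hs⟩ := h
  have aux : ∀ a b, G.Adj a b → Cn G t x a → ¬ Cn G t x b → c' a ≠ c b := by
    intro a b hab ha hb he
    have hbx : b ≠ x := by rintro rfl; exact hb (Reachable.refl _)
    apply hb
    refine ha.trans (Cn_adj hab ?_)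
    rw [← hs b hbx, ← he, hc' a ha, t_reach ha]
  obtain ⟨a, b, hab, he⟩ := hnc (fun v => if Cn G t x v then c' v else c v)
  by_cases ha : Cn G t x a
  · by_cases hb : Cn G t x b
    · simp only [ha, hb, if_true] at he
      exact ⟨a, b, ha, hb, hab, he⟩
    · simp only [ha, hb, if_true, if_false] at he
      exact absurd he (aux a b hab ha hb)
  · by_cases hb : Cn G t x b
    · simp only [ha, hb, if_true, if_false] at he
      exact absurd he.symm (aux b a hab.symm hb ha)
    · simp only [ha, hb, if_false] at he
      refine absurd he (hc a b hab ?_ ?_)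
      · rintro rfl; exact ha (Reachable.refl _)
      · rintro rfl; exact hb (Reachable.refl _)

lemma dd_le {G : SimpleGraph V} {v : V} (S : Finset V) (h : ∀ w, G.Adj v w → w ∈ S) :
    dd G v ≤ S.card := by
  apply card_le_card
  intro w hw
  rw [mem_filter] at hw
  exact h w hw.2

lemma nbr_adj {G : SimpleGraph V} {side : α → Bool} (C : Ctx G side) {x : V} {t : V → Bool}
    (h : Good G side x t) (ht : dg G t x = rk side (t x)) (hx : t x = true) {v1 v2 : V}
    (h1 : G.Adj x v1) (ht1 : t v1 = true) (h2 : G.Adj x v2) (ht2 : t v2 = true)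
    (hne : v1 ≠ v2) : G.Adj v1 v2 := by
  let H : SimpleGraph V :=
    { Adj := fun a b => G.Adj a b ∧ t a = t b ∧ Cn G t x a
      symm := ⟨fun a b h => ⟨h.1.symm, h.2.1.symm, h.2.2.trans (Cn_adj h.1 h.2.1)⟩⟩
      loopless := ⟨fun _ h => G.loopless.irrefl _ h.1⟩ }
  let β := {j : α // side j = true}
  have hcard : Fintype.card β = rk side true := by
    rw [rk, Fintype.card_subtype]
  have hne : Nonempty β := by
    rw [← Fintype.card_pos_iff, hcard]; have := C.r2; omega
  obtain ⟨c, hc, hs⟩ := h.1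
  let e : α → β := fun j => if hj : side j = true then ⟨j, hj⟩ else hne.some
  have he : ∀ j, side j = true → (e j).1 = j := by
    intro j hj; simp [e, hj]
  have hnc : NC H β := by
    intro c'
    obtain ⟨a, b, ha, hb, hab, heq⟩ := noncol_comp C.nc h.1 (fun v => (c' v).1)
      (fun v _ => by rw [(c' v).2, hx])
    exact ⟨a, b, ⟨hab, by rw [t_reach ha, t_reach hb], ha⟩, Subtype.ext heq⟩
  have hl : ∀ v, dd H v ≤ Fintype.card β := by
    intro v
    rw [hcard]
    by_cases hv : Cn G t x v
    · have e1 := (Good_reach C.nc h ht hv).2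
      rw [t_reach hv, hx] at e1
      rw [← e1, dg]
      refine dd_le _ (fun w hw => ?_)
      rw [mem_nb]
      exact ⟨hw.1, hw.2.1.symm⟩
    · have := dd_le (G := H) (v := v) ∅ (fun w hw => absurd hw.2.2 hv)
      rw [card_empty] at this
      omega
  have hb := brooks (H := H) (β := β) hnc hl (by rw [hcard]; exact C.r2) (x := x)
    (c := fun v => e (c v)) (by
      intro a b hab ha hb heq
      have sa : side (c a) = true := by rw [hs a ha, t_reach hab.2.2, hx]
      have sb : side (c b) = true := by rw [hs b hb, ← hab.2.1, t_reach hab.2.2, hx]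
      apply hc a b hab.1 ha hb
      rw [← he _ sa, ← he _ sb]
      exact congrArg _ heq) (v1 := v1) (v2 := v2)
    ⟨h1, by rw [hx, ht1], Reachable.refl _⟩ ⟨h2, by rw [hx, ht2], Reachable.refl _⟩ ‹_›
  exact hb.1

section facts
variable {G : SimpleGraph V} {side : α → Bool}

lemma cl1 (C : Ctx G side) {z a b : V} {t : V → Bool} (h : Good G side z t) (hl : Low G side z)
    (ha : G.Adj z a) (hta : t a = true) (hb : G.Adj z b) (htb : t b = true) (hne : a ≠ b) :
    G.Adj a b := by
  have hg := Good_upd h true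
  refine nbr_adj C hg (dg_low C.nc hg.1 hl) (by simp) ha ?_ hb ?_ hne
  · rw [Function.update_of_ne ha.ne', hta]
  · rw [Function.update_of_ne hb.ne', htb]

lemma goodT (C : Ctx G side) {z a : V} {t : V → Bool} (h : Good G side z t) (hl : Low G side z)
    (ha : G.Adj z a) (hta : t a = true) :
    Good G side a (Function.update t z true) ∧ dg G (Function.update t z true) a = rk side true := by
  have hg := Good_upd h true
  have := Good_swap C.nc hg (dg_low C.nc hg.1 hl) ha (by simp [Function.update_of_ne ha.ne', hta])
  refine ⟨this.1, ?_⟩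
  rw [this.2, Function.update_of_ne ha.ne', hta]

lemma cl2 (C : Ctx G side) {z a b : V} {t : V → Bool} (h : Good G side z t) (hl : Low G side z)
    (ha : G.Adj z a) (hta : t a = true) (hab : G.Adj a b) (htb : t b = true) (hne : b ≠ z) :
    G.Adj z b := by
  obtain ⟨hg, hd⟩ := goodT C h hl ha hta
  have e1 : Function.update t z true a = true := by rw [Function.update_of_ne ha.ne', hta]
  refine nbr_adj C hg (by rw [hd, e1]) e1 ha.symm (by simp) hab ?_ hne.symm
  rw [Function.update_of_ne hne, htb]

lemma ex_low (C : Ctx G side) {z : V} {t : V → Bool} (h : Good G side z t) (hl : Low G side z) :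
    ∃ b, G.Adj z b ∧ t b = true ∧ Low G side b := by
  have h1 := nb_low C.nc h.1 hl true
  have h2 := C.r2
  obtain ⟨a, ha, b, hb, hab⟩ := one_lt_card.1 (by omega : 1 < (nb G t z true).card)
  rw [mem_nb] at ha hb
  rcases C.ind a b (cl1 C h hl ha.1 ha.2 hb.1 hb.2 hab) with h | h
  · exact ⟨a, ha.1, ha.2, h⟩
  · exact ⟨b, hb.1, hb.2, h⟩

lemma two_reg (C : Ctx G side) {x : V} {t : V → Bool} (h : Good G side x t) (hl : Low G side x)
    (hx : t x = false) : ∀ v, Cn G t x v → (nb G t v false).card = 2 := by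
  intro v hv
  have := (Good_reach C.nc h (dg_low C.nc h.1 hl) hv).2
  rw [dg, t_reach hv, hx, C.r1] at this
  exact this

lemma good_comp (C : Ctx G side) {x v : V} {t : V → Bool} (h : Good G side x t)
    (hl : Low G side x) (hv : Cn G t x v) : Good G side v t :=
  (Good_reach C.nc h (dg_low C.nc h.1 hl) hv).1

lemma cyc_conn1 {t : V → Bool} {y : V} (hy : t y = false)
    (h2 : ∀ v, Cn G t y v → (nb G t v false).card = 2) {a p : V} (ha : Cn G t y a) (hay : a ≠ y)
    (hp : G.Adj y p) (htp : t p = false) : Cn G (Function.update t y true) a p := by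
  by_contra hcon
  let t' := Function.update t y true
  let X : Set V := {v | Cn G t' a v}
  have hX : ∀ v ∈ X, v ≠ y ∧ Cn G t y v := by
    intro v hv
    refine Cn_closed (X := {v | v ≠ y ∧ Cn G t y v}) hv ⟨hay, ha⟩ ?_
    rintro u w ⟨hu1, hu2⟩ huw htu
    have hwy : w ≠ y := by
      rintro rfl
      simp only [t', Function.update_self, Function.update_of_ne hu1] at htu
      rw [t_reach hu2, hy] at htu
      simp at htu
    refine ⟨hwy, hu2.trans (Cn_adj huw ?_)⟩
    simpa only [t', Function.update_of_ne hu1, Function.update_of_ne hwy] using htu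
  have hstep : ∀ u w, u ∈ X → G.Adj u w → t u = t w → w ≠ y → w ∈ X := by
    intro u w hu huw htu hwy
    refine Reachable.trans hu (Cn_adj huw ?_)
    simpa only [t', Function.update_of_ne (hX u hu).1, Function.update_of_ne hwy] using htu
  let N := (nb G t y false).filter (· ∈ X)
  have hpar := parity' (Gs G t) X (by
    intro v hv
    rw [dd_Gs, dg, t_reach (hX v hv).2, hy, h2 v (hX v hv).2]
    exact even_two) (N.image (fun v => (v, y))) (by
    intro u w
    simp only [N, mem_image, mem_filter, mem_nb, Prod.mk.injEq]
    constructor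
    · rintro ⟨hu, hw, huw⟩
      have hwy : w = y := by
        by_contra hwy
        exact hw (hstep u w hu huw.1 huw.2 hwy)
      subst hwy
      exact ⟨u, ⟨⟨huw.1.symm, by rw [huw.2, hy]⟩, hu⟩, rfl, rfl⟩
    · rintro ⟨u', ⟨⟨h1, h2⟩, h3⟩, rfl, rfl⟩
      exact ⟨h3, fun h => (hX _ h).1 rfl, h1.symm, by rw [h2, hy]⟩)
  rw [card_image_of_injective _ (fun u v h => by simpa using h)] at hpar
  have hsub : N ⊆ (nb G t y false).erase p := by
    intro v hv
    simp only [N, mem_filter] at hv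
    rw [mem_erase]
    refine ⟨?_, hv.1⟩
    rintro rfl
    exact hcon hv.2
  have hc := card_le_card hsub
  rw [card_erase_of_mem (mem_nb.2 ⟨hp, htp⟩), h2 y (Reachable.refl _)] at hc
  have hN0 : N.card = 0 := by
    rcases hpar with ⟨m, hm⟩
    omega
  rw [card_eq_zero] at hN0
  have hyX : y ∈ X := by
    refine Cn_closed (ha.symm) X (Reachable.refl _) ?_
    intro u w hu huw htu
    by_cases hwy : w = y
    · subst hwy
      exfalso
      have : u ∈ N := by
        simp only [N, mem_filter, mem_nb]
        exact ⟨⟨huw.symm, by rw [htu, hy]⟩, hu⟩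
      rw [hN0] at this
      simp at this
    · exact hstep u w hu huw htu hwy
  exact (hX y hyX).1 rfl

lemma cyc_conn {t : V → Bool} {y : V} (hy : t y = false)
    (h2 : ∀ v, Cn G t y v → (nb G t v false).card = 2) {a b : V} (ha : Cn G t y a) (hay : a ≠ y)
    (hb : Cn G t y b) (hby : b ≠ y) : Cn G (Function.update t y true) a b := by
  obtain ⟨p, hp⟩ := card_pos.1 (by rw [h2 y (Reachable.refl _)]; omega :
    0 < (nb G t y false).card)
  rw [mem_nb] at hp
  exact (cyc_conn1 hy h2 ha hay hp.1 hp.2).trans (cyc_conn1 hy h2 hb hby hp.1 hp.2).symm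

/-- transfer of connectivity of `C - y` to another partition -/
lemma cyc_conn' {t t' : V → Bool} {y : V} (hy : t y = false)
    (h2 : ∀ v, Cn G t y v → (nb G t v false).card = 2) {a b : V} (ha : Cn G t y a) (hay : a ≠ y)
    (hb : Cn G t y b) (hby : b ≠ y) (hA : ∀ v, Cn G t y v → v ≠ y → t' v = false) :
    Cn G t' a b := by
  have h := cyc_conn hy h2 ha hay hb hby
  have key : ∀ v, Cn G (Function.update t y true) a v → v ≠ y ∧ Cn G t y v := by
    intro v hv
    refine Cn_closed (X := {v | v ≠ y ∧ Cn G t y v}) hv ⟨hay, ha⟩ ?_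
    rintro u w ⟨hu1, hu2⟩ huw htu
    have hwy : w ≠ y := by
      rintro rfl
      simp only [Function.update_self, Function.update_of_ne hu1] at htu
      rw [t_reach hu2, hy] at htu
      simp at htu
    refine ⟨hwy, hu2.trans (Cn_adj huw ?_)⟩
    simpa only [Function.update_of_ne hu1, Function.update_of_ne hwy] using htu
  refine Cn_mono h ?_
  intro u v hu huv htu
  have h1 := key u hu
  have h3 := key v (hu.trans (Cn_adj huv htu))
  rw [hA u h1.2 h1.1, hA v h3.2 h3.1]

lemma comp_adj {t t' : V → Bool} {y b : V} (hy : t y = false)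
    (h2 : ∀ v, Cn G t y v → (nb G t v false).card = 2)
    (hb : t' b = false)
    (h2' : ∀ v, Cn G t' b v → (nb G t' v false).card = 2)
    (hA : ∀ v, Cn G t y v → v ≠ y → t' v = false)
    (hB : ∀ v w, Cn G t y v → v ≠ y → G.Adj v w → t' w = false → w ≠ b → (Cn G t y w ∧ w ≠ y))
    {v0 : V} (hv0 : Cn G t y v0) (hv0y : v0 ≠ y) (hbv : G.Adj b v0)
    {p : V} (hp : G.Adj y p) (htp : t p = false) : G.Adj b p := by
  have hyp : Cn G t y p := Cn_adj hp (by rw [hy, htp])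
  have hc : Cn G t' v0 p := cyc_conn' hy h2 hv0 hv0y hyp hp.ne' hA
  have hbp : Cn G t' b p := (Cn_adj hbv (by rw [hb, hA v0 hv0 hv0y])).trans hc
  by_contra hna
  have hsub : nb G t' p false ⊆ (nb G t p false).erase y := by
    intro w hw
    rw [mem_nb] at hw
    rw [mem_erase, mem_nb]
    have hwb : w ≠ b := by rintro rfl; exact hna hw.1.symm
    have := hB p w hyp hp.ne' hw.1 hw.2 hwb
    exact ⟨this.2, hw.1, by rw [t_reach this.1, hy]⟩
  have := card_le_card hsub
  rw [card_erase_of_mem (mem_nb.2 ⟨hp.symm, hy⟩), h2 p hyp, h2' p hbp] at this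
  omega

/-- moving `z` to the other side and taking out a low `b`. -/
lemma comp_adj2 (C : Ctx G side) {t : V → Bool} {z b : V} (hg : Good G side z t)
    (hl : Low G side z) (hz : t z = false) (hlb : Low G side b) (hzb : G.Adj z b)
    (htb : t b = true) {v0 : V} (hv0 : Cn G t z v0) (hv0z : v0 ≠ z) (hbv : G.Adj b v0)
    {p : V} (hp : G.Adj z p) (htp : t p = false) : G.Adj b p := by
  have hgb := Good_upd (goodT C hg hl hzb htb).1 false
  have hbn : ∀ v, Cn G t z v → v ≠ b := by
    rintro v hv rfl
    rw [t_reach hv, hz] at htb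
    simp at htb
  refine comp_adj (t' := Function.update (Function.update t z true) b false) hz
    (two_reg C hg hl hz) (by simp) (two_reg C hgb hlb (by simp)) ?_ ?_ hv0 hv0z hbv hp htp
  · intro v hv hvz
    rw [Function.update_of_ne (hbn v hv), Function.update_of_ne hvz, t_reach hv, hz]
  · intro v w hv hvz hvw htw hwb
    rw [Function.update_of_ne hwb] at htw
    have hwz : w ≠ z := by rintro rfl; simp at htw
    rw [Function.update_of_ne hwz] at htw
    exact ⟨hv.trans (Cn_adj hvw (by rw [t_reach hv, hz, htw])), hwz⟩

def Dis (G : SimpleGraph V) (t : V → Bool) (z y : V) : Prop :=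
  ∀ b, t b = true → G.Adj z b → ¬ G.Adj y b

/-- if not `Dis`, the two neighbourhoods coincide -/
lemma not_dis (C : Ctx G side) {t : V → Bool} {z y : V} (hgz : Good G side z t)
    (hgy : Good G side y t) (hlz : Low G side z) (hly : Low G side y) (htz : t z = false)
    (hty : t y = false) (h : ¬ Dis G t z y) {b : V} (htb : t b = true) (hzb : G.Adj z b) :
    G.Adj y b := by
  unfold Dis at h
  push Not at h
  obtain ⟨b0, h1, h2, h3⟩ := h
  by_cases hb : b0 = b
  · exact hb ▸ h3
  · refine cl2 C hgy hly h3 h1 (cl1 C hgz hlz h2 h1 hzb htb hb) htb ?_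
    rintro rfl
    rw [hty] at htb; simp at htb

lemma long (C : Ctx G side) {t : V → Bool} {z y : V} (hgz : Good G side z t)
    (hlz : Low G side z) (hly : Low G side y) (htz : t z = false)
    (hty : t y = false) (hzy : G.Adj z y) (h : ¬ Dis G t z y) :
    ∃ q, G.Adj z q ∧ G.Adj y q ∧ t q = false ∧
      ∀ b, t b = true → G.Adj z b → Low G side b → G.Adj q b := by
  have hcy : Cn G t z y := Cn_adj hzy (by rw [htz, hty])
  have hgy := good_comp C hgz hlz hcy
  have hz2 := two_reg C hgz hlz htz z (Reachable.refl _)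
  have hy2 := two_reg C hgy hly hty y (Reachable.refl _)
  obtain ⟨q, hq, hqy⟩ := exists_mem_ne (by omega : 1 < (nb G t z false).card) y
  obtain ⟨q', hq', hqz⟩ := exists_mem_ne (by omega : 1 < (nb G t y false).card) z
  rw [mem_nb] at hq hq'
  have key : ∀ b, t b = true → G.Adj z b → Low G side b → G.Adj q b ∧ G.Adj q' b := by
    intro b htb hzb hlb
    have hyb := not_dis C hgz hgy hlz hly htz hty h htb hzb
    constructor
    · exact (comp_adj2 C hgz hlz htz hlb hzb htb hcy hzy.ne' hyb.symm hq.1 hq.2).symm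
    · exact (comp_adj2 C hgy hly hty hlb hyb htb hcy.symm hzy.ne hzb.symm hq'.1 hq'.2).symm
  obtain ⟨b, hzb, htb, hlb⟩ := ex_low C hgz hlz
  have hyb := not_dis C hgz hgy hlz hly htz hty h htb hzb
  have hqq : q = q' := by
    by_contra hne
    have hgb := (goodT C hgz hlz hzb htb).1
    have hn := nb_low C.nc hgb.1 hlb false
    rw [C.r1] at hn
    have hsub : ({y, q, q'} : Finset V) ⊆ nb G (Function.update t z true) b false := by
      intro v hv
      simp only [mem_insert, mem_singleton] at hv
      rw [mem_nb]
      rcases hv with rfl | rfl | rfl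
      · exact ⟨hyb.symm, by rw [Function.update_of_ne hzy.ne', hty]⟩
      · exact ⟨(key b htb hzb hlb).1.symm, by rw [Function.update_of_ne hq.1.ne', hq.2]⟩
      · exact ⟨(key b htb hzb hlb).2.symm, by rw [Function.update_of_ne hqz, hq'.2]⟩
    have h3 := card_le_card hsub
    rw [hn, card_eq_three.2 ⟨y, q, q', hqy.symm, hq'.1.ne, hne, rfl⟩] at h3
    omega
  subst hqq
  exact ⟨q, hq.1, hq'.1, hq.2, fun b h1 h2 h3 => (key b h1 h2 h3).1⟩

lemma adj_lows (C : Ctx G side) {t : V → Bool} {x : V} (hg : Good G side x t)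
    (hx : t x = false) :
    ∃ z y, Cn G t x z ∧ Cn G t x y ∧ G.Adj z y ∧ Low G side z ∧ Low G side y := by
  obtain ⟨i, hi, j, hj, hij⟩ := one_lt_card.1 (by
    have := C.r1; unfold rk at this; omega : 1 < (univ.filter (fun j => side j = false)).card)
  simp only [mem_filter, mem_univ, true_and] at hi hj
  obtain ⟨a, b, ha, hb, hab, he⟩ := noncol_comp C.nc hg.1
    (fun v => if Low G side v then i else j) (fun v _ => by
      by_cases h : Low G side v <;> simp [h, hi, hj, hx])
  refine ⟨a, b, ha, hb, hab, ?_⟩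
  by_cases h1 : Low G side a
  · by_cases h2 : Low G side b
    · exact ⟨h1, h2⟩
    · simp only [h1, h2, if_true, if_false] at he
      exact absurd he hij
  · have h2 := (C.ind a b hab).resolve_left h1
    simp only [h1, h2, if_true, if_false] at he
    exact absurd he.symm hij

end facts

end

end OreBrooks


open SimpleGraph
set_option linter.unusedSectionVars false

namespace OreBrooks

section
open scoped Classical
open Finset

variable {V : Type*} [Fintype V] {α : Type*} [Fintype α]
variable {G : SimpleGraph V} {side : α → Bool}

structure Inv (G : SimpleGraph V) (side : α → Bool) (y : V) (t : V → Bool) (W : Set V) : Prop where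
  good : Good G side y t
  low : Low G side y
  ty : t y = true
  yW : y ∉ W
  cl : ∀ v ∈ W, ∀ w, w ∉ W → G.Adj v w → t v ≠ t w
  nbF : ∀ w, G.Adj y w → t w = false → w ∈ W
  sealW : ∀ u t', Good G side u t' → Low G side u → u ∉ W → u ≠ y → (∀ v ∈ W, t' v = t v) →
    t' y = true → (∀ v ∈ W, ∀ w, w ∉ W → w ≠ u → G.Adj v w → t' v ≠ t' w) →
    ∀ v ∈ W, ¬ G.Adj u v

lemma step_core (C : Ctx G side) {t : V → Bool} {z y : V} (hgz : Good G side z t)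
    (hgy : Good G side y t) (hlz : Low G side z) (hly : Low G side y) (htz : t z = false)
    (hty : t y = false) (hzy : G.Adj z y) (hD : Dis G t z y) (W0 : Set V) (hyW : y ∉ W0)
    (hcl : ∀ v ∈ W0, ∀ w, w ∉ W0 → G.Adj v w → t v ≠ t w)
    (hyn : ∀ v ∈ W0, ¬ G.Adj y v)
    (hseal : ∀ u t', Good G side u t' → Low G side u → u ∉ W0 → ¬ Cn G t z u →
      (∀ v ∈ W0, t' v = t v) →
      (∀ v ∈ W0, ∀ w, w ∉ W0 → w ≠ u → G.Adj v w → t' v ≠ t' w) → ∀ v ∈ W0, ¬ G.Adj u v) :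
    Inv G side y (Function.update t y true)
      (W0 ∪ {v | v ≠ y ∧ Cn G t z v} ∪ {b | G.Adj z b ∧ t b = true}) := by
  set W' : Set V := W0 ∪ {v | v ≠ y ∧ Cn G t z v} ∪ {b | G.Adj z b ∧ t b = true} with hW'
  have hcy : Cn G t z y := Cn_adj hzy (by rw [htz, hty])
  have m0 : ∀ v, v ∈ W0 → v ∈ W' := fun v hv => Or.inl (Or.inl hv)
  have m1 : ∀ v, v ≠ y → Cn G t z v → v ∈ W' := fun v h1 h2 => Or.inl (Or.inr ⟨h1, h2⟩)
  have m2 : ∀ v, G.Adj z v → t v = true → v ∈ W' := fun v h1 h2 => Or.inr ⟨h1, h2⟩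
  have hyW' : y ∉ W' := by
    rintro ((h | h) | h)
    · exact hyW h
    · exact h.1 rfl
    · have := h.2
      rw [hty] at this; simp at this
  have hup : ∀ w, w ≠ y → Function.update t y true w = t w := fun w hw =>
    Function.update_of_ne hw _ _
  have h2y := two_reg C hgy hly hty
  refine ⟨Good_upd hgy true, hly, by simp, hyW', ?_, ?_, ?_⟩
  · intro v hv w hw hvw he
    have hvy : v ≠ y := by rintro rfl; exact hyW' hv
    rw [hup v hvy] at he
    rcases hv with (hv | hv) | hv
    · by_cases hwy : w = y
      · subst hwy; exact hyn v hv hvw.symm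
      · rw [hup w hwy] at he
        exact hcl v hv w (fun h => hw (m0 w h)) hvw he
    · have e1 : t v = false := by rw [t_reach hv.2, htz]
      have hwy : w ≠ y := by rintro rfl; rw [e1] at he; simp at he
      rw [hup w hwy] at he
      exact hw (m1 w hwy (hv.2.trans (Cn_adj hvw he)))
    · by_cases hwy : w = y
      · subst hwy; exact hD v hv.2 hv.1 hvw.symm
      · rw [hup w hwy] at he
        have e1 : t w = true := by rw [← he, hv.2]
        refine hw (m2 w (cl2 C hgz hlz hv.1 hv.2 hvw e1 ?_) e1)
        rintro rfl; rw [htz] at e1; simp at e1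
  · intro w hyw htw
    rw [hup w hyw.ne'] at htw
    exact m1 w hyw.ne' (hcy.trans (Cn_adj hyw (by rw [hty, htw])))
  · intro u t' hgu hlu huW huy heq hty' hcl' v hv huv
    have heq' : ∀ w ∈ W', t' w = t w := by
      intro w hw
      rw [heq w hw, hup w (by rintro rfl; exact hyW' hw)]
    have hCu : ¬ Cn G t z u := fun h => huW (m1 u huy h)
    have hvu : v ≠ u := huv.ne'
    rcases hv with (hv | hv) | hv
    · refine hseal u t' hgu hlu (fun h => huW (m0 u h)) hCu (fun v hv => heq' v (m0 v hv)) ?_ v hv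
        huv
      intro v hv w hw hwu hvw
      by_cases hwW : w ∈ W'
      · rw [heq' v (m0 v hv), heq' w hwW]
        exact hcl v hv w hw hvw
      · exact hcl' v (m0 v hv) w hwW hwu hvw
    · have hg2 := Good_upd hgu false
      have hA : ∀ v, Cn G t y v → v ≠ y → Function.update t' u false v = false := by
        intro v h1 h2
        by_cases hvu : v = u
        · subst hvu; simp
        · rw [Function.update_of_ne hvu, heq' v (m1 v h2 (hcy.trans h1)), t_reach h1, hty]
      have hc := cyc_conn' hty h2y (hcy.symm.trans hv.2) hv.1 hcy.symm hzy.ne hA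
      have hcu : Cn G (Function.update t' u false) u z :=
        (Cn_adj huv (by
          rw [Function.update_self, hA v (hcy.symm.trans hv.2) hv.1])).trans hc
      have hz2 := two_reg C hg2 hlu (by simp) z hcu
      have hsub : nb G (Function.update t' u false) z false ⊆ (nb G t z false).erase y := by
        intro w hw
        rw [mem_nb] at hw
        obtain ⟨hzw, htw⟩ := hw
        rw [mem_erase, mem_nb]
        have hwy : w ≠ y := by
          rintro rfl
          rw [Function.update_of_ne huy.symm, hty'] at htw
          simp at htw
        have hwu : w ≠ u := by
          rintro rfl
          cases h : t w
          · exact hCu (Cn_adj hzw (by rw [htz, h]))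
          · exact huW (m2 w hzw h)
        rw [Function.update_of_ne hwu] at htw
        refine ⟨hwy, hzw, ?_⟩
        cases h : t w
        · rfl
        · rw [heq' w (m2 w hzw h), h] at htw
          exact htw
      have h3 := card_le_card hsub
      rw [card_erase_of_mem (mem_nb.2 ⟨hzy, hty⟩), hz2,
        two_reg C hgz hlz htz z (Reachable.refl _)] at h3
      omega
    · obtain ⟨b, hzb, htb, hlb⟩ := ex_low C hgz hlz
      have hbW := m2 b hzb htb
      have hbu : b ≠ u := by rintro rfl; exact huW hbW
      have htb' : t' b = true := by rw [heq' b hbW, htb]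
      have hub : G.Adj u b := by
        by_cases hvb : v = b
        · exact hvb ▸ huv
        · exact cl2 C hgu hlu huv (by rw [heq' v (Or.inr hv), hv.2])
            (cl1 C hgz hlz hv.1 hv.2 hzb htb hvb) htb' hbu
      have hg3 := Good_upd (goodT C hgu hlu hub htb').1 false
      obtain ⟨p, hp, hpz⟩ := exists_mem_ne (by
        rw [h2y y (Reachable.refl _)]; omega : 1 < (nb G t y false).card) z
      rw [mem_nb] at hp
      have hbC : ∀ v, Cn G t y v → v ≠ b := by
        rintro v h1 rfl
        rw [t_reach h1, hty] at htb
        simp at htb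
      have huC : ∀ v, Cn G t y v → v ≠ u := by
        rintro v h1 rfl
        exact hCu (hcy.trans h1)
      have hbp : G.Adj b p := by
        refine comp_adj (t' := Function.update (Function.update t' u true) b false) hty h2y
          (by simp) (two_reg C hg3 hlb (by simp)) ?_ ?_ hcy.symm hzy.ne hzb.symm hp.1 hp.2
        · intro v h1 h2
          rw [Function.update_of_ne (hbC v h1), Function.update_of_ne (huC v h1),
            heq' v (m1 v h2 (hcy.trans h1)), t_reach h1, hty]
        · intro v w h1 h2 hvw htw hwb
          rw [Function.update_of_ne hwb] at htw
          have hwu : w ≠ u := by rintro rfl; simp at htw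
          rw [Function.update_of_ne hwu] at htw
          have hwy : w ≠ y := by rintro rfl; rw [hty'] at htw; simp at htw
          have hvW := m1 v h2 (hcy.trans h1)
          by_cases hw : w ∈ W'
          · exact ⟨h1.trans (Cn_adj hvw (by rw [t_reach h1, hty, ← heq' w hw, htw])), hwy⟩
          · exfalso
            apply hcl' v hvW w hw hwu hvw
            rw [heq' v hvW, t_reach h1, hty, htw]
      have hzp : Cn G t z p := hcy.trans (Cn_adj hp.1 (by rw [hty, hp.2]))
      have hby := comp_adj2 C hgz hlz htz hlb hzb htb hzp hpz hbp hzy hty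
      exact hD b htb hzb hby.symm

lemma step (C : Ctx G side) {y0 : V} {t0 : V → Bool} {W : Set V} (I : Inv G side y0 t0 W) :
    ∃ y1 t1 W1, Inv G side y1 t1 W1 ∧ W ⊆ W1 ∧ ∃ z, z ∈ W1 ∧ z ∉ W := by
  obtain ⟨x, hyx, htx0, hlx⟩ := ex_low C I.good I.low
  have hgx0 : Good G side x t0 := by
    have := (goodT C I.good I.low hyx htx0).1
    rwa [← I.ty, Function.update_eq_self] at this
  have hxW : x ∉ W := fun h => I.cl x h y0 I.yW hyx.symm (by rw [htx0, I.ty])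
  have hxn : ∀ v ∈ W, ¬ G.Adj x v :=
    I.sealW x t0 hgx0 hlx hxW hyx.ne' (fun _ _ => rfl) I.ty (fun v hv w hw _ h => I.cl v hv w hw h)
  set t : V → Bool := Function.update t0 x false with ht
  have hup : ∀ w, w ≠ x → t w = t0 w := fun w hw => Function.update_of_ne hw _ _
  have hgx : Good G side x t := Good_upd hgx0 false
  have htx : t x = false := by simp [ht]
  have hty0 : t y0 = true := by rw [hup y0 hyx.ne, I.ty]
  have hWx : ∀ v ∈ W, v ≠ x := by rintro v hv rfl; exact hxW hv
  have clW : ∀ v ∈ W, ∀ w, w ∉ W → G.Adj v w → t v ≠ t w := by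
    intro v hv w hw hvw
    have hwx : w ≠ x := by rintro rfl; exact hxn v hv hvw.symm
    rw [hup v (hWx v hv), hup w hwx]
    exact I.cl v hv w hw hvw
  have hCW : ∀ v, Cn G t x v → v ∉ W := by
    intro v hv
    refine Cn_closed hv (X := {v | v ∉ W}) hxW ?_
    intro u w hu huw htu hw
    exact clW w hw u hu huw.symm htu.symm
  have hCf : ∀ v, Cn G t x v → t v = false := fun v hv => by rw [t_reach hv, htx]
  have hCy0 : ∀ v, Cn G t x v → v ≠ y0 := by
    rintro v hv rfl
    have := hCf v hv
    rw [hty0] at this; simp at this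
  have hCn : ∀ v, Cn G t x v → v ≠ x → ¬ G.Adj v y0 := by
    intro v hv hvx hadj
    refine hCW v hv (I.nbF v hadj.symm ?_)
    rw [← hup v hvx, hCf v hv]
  -- choice of the pair
  have hpair : ∃ z y, Cn G t x z ∧ Cn G t x y ∧ G.Adj z y ∧ Low G side z ∧ Low G side y ∧ y ≠ x ∧
      Dis G t z y := by
    by_cases hA : ∃ y, G.Adj x y ∧ t y = false ∧ Low G side y
    · obtain ⟨y, hxy, hty, hly⟩ := hA
      have hcy : Cn G t x y := Cn_adj hxy (by rw [htx, hty])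
      refine ⟨x, y, Reachable.refl _, hcy, hxy, hlx, hly, hxy.ne', ?_⟩
      intro b htb hxb hyb
      apply hCn y hcy hxy.ne'
      by_cases hb : b = y0
      · exact hb ▸ hyb
      · exact cl2 C (good_comp C hgx hlx hcy) hly hyb htb
          (cl1 C hgx hlx hxb htb hyx.symm hty0 hb) hty0 (hCy0 y hcy).symm
    · obtain ⟨z, y, hcz, hcy, hzy, hlz, hly⟩ := adj_lows C hgx htx
      have hyx' : y ≠ x := by
        rintro rfl
        exact hA ⟨z, hzy.symm, hCf z hcz, hlz⟩
      refine ⟨z, y, hcz, hcy, hzy, hlz, hly, hyx', ?_⟩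
      by_contra hD
      have hgz := good_comp C hgx hlx hcz
      have h2 := two_reg C hgx hlx htx
      obtain ⟨q, hzq, hyq, htq, -⟩ := long C hgz hlz hly (hCf z hcz) (hCf y hcy) hzy hD
      have hcq : Cn G t x q := hcz.trans (Cn_adj hzq (by rw [hCf z hcz, htq]))
      have two : ∀ a b c d, Cn G t x a → G.Adj a b → G.Adj a c → t b = false → t c = false →
          b ≠ c → G.Adj a d → t d = false → d = b ∨ d = c := by
        intro a b c d ha hab hac htb htc hbc had htd
        have hs : ({b, c} : Finset V) = nb G t a false := by
          apply eq_of_subset_of_card_le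
          · intro w hw
            simp only [mem_insert, mem_singleton] at hw
            rw [mem_nb]
            rcases hw with rfl | rfl
            · exact ⟨hab, htb⟩
            · exact ⟨hac, htc⟩
          · rw [h2 a ha, card_pair hbc]
        have : d ∈ ({b, c} : Finset V) := by rw [hs, mem_nb]; exact ⟨had, htd⟩
        simpa using this
      have hx3 : x ∈ ({z, y, q} : Set V) := by
        refine Cn_closed hcz.symm _ (by simp) ?_
        intro u w hu huw htu
        simp only [Set.mem_insert_iff, Set.mem_singleton_iff] at hu ⊢
        rcases hu with rfl | rfl | rfl
        · have := two u y q w hcz hzy hzq (hCf y hcy) htq hyq.ne huw (by rw [← htu, hCf u hcz])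
          tauto
        · have := two u z q w hcy hzy.symm hyq (hCf z hcz) htq hzq.ne huw
            (by rw [← htu, hCf u hcy])
          tauto
        · have := two u z y w hcq hzq.symm hyq.symm (hCf z hcz) (hCf y hcy) hzy.ne huw
            (by rw [← htu, htq])
          tauto
      simp only [Set.mem_insert_iff, Set.mem_singleton_iff] at hx3
      rcases hx3 with h | h | h
      · subst h
        exact hA ⟨y, hzy, hCf y hcy, hly⟩
      · exact hyx' h.symm
      · subst h
        exact hA ⟨z, hzq.symm, hCf z hcz, hlz⟩
  obtain ⟨z, y, hcz, hcy, hzy, hlz, hly, hyx', hD⟩ := hpair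
  have hgz := good_comp C hgx hlx hcz
  have hgy := good_comp C hgx hlx hcy
  let K : Set V := {v | v = y0 ∨ (G.Adj y0 v ∧ t v = true)}
  have hI := step_core C hgz hgy hlz hly (hCf z hcz) (hCf y hcy) hzy hD (W ∪ K) (by
      rintro (h | h | h)
      · exact hCW y hcy h
      · exact hCy0 y hcy h
      · have := h.2
        rw [hCf y hcy] at this; simp at this) (by
      intro v hv w hw hvw he
      have hwW : w ∉ W := fun h => hw (Or.inl h)
      rcases hv with hv | hv | hv
      · exact clW v hv w hwW hvw he
      · subst hv
        exact hw (Or.inr (Or.inr ⟨hvw, by rw [← he, hty0]⟩))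
      · have htw : t w = true := by rw [← he, hv.2]
        have hwy : w ≠ y0 := fun h => hw (Or.inr (Or.inl h))
        have hvx : v ≠ x := by
          rintro rfl
          have := hv.2
          rw [htx] at this; simp at this
        have hwx : w ≠ x := by rintro rfl; rw [htx] at htw; simp at htw
        exact hw (Or.inr (Or.inr ⟨cl2 C I.good I.low hv.1 (by rw [← hup v hvx, hv.2]) hvw
          (by rw [← hup w hwx, htw]) hwy, htw⟩))) (by
      intro v hv hyv
      rcases hv with hv | hv | hv
      · refine I.sealW y t hgy hly (hCW y hcy) (hCy0 y hcy) (fun v hv => hup v (hWx v hv)) hty0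
          (fun v hv w hw _ h => clW v hv w hw h) v hv hyv
      · subst hv
        exact hCn y hcy hyx' hyv
      · exact hCn y hcy hyx' (cl2 C hgy hly hyv hv.2 hv.1.symm hty0 (hCy0 y hcy).symm)) (by
      intro u t' hgu hlu huW hCu heq hcl' v hv huv
      have huW' : u ∉ W := fun h => huW (Or.inl h)
      have huy : u ≠ y0 := fun h => huW (Or.inr (Or.inl h))
      have hty0' : t' y0 = true := by rw [heq y0 (Or.inr (Or.inl rfl)), hty0]
      have hK : ¬ G.Adj u y0 := by
        intro h
        cases h0 : t0 u
        · exact huW' (I.nbF u h.symm h0)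
        · by_cases hux : u = x
          · exact hCu (hux ▸ hcz.symm)
          · exact huW (Or.inr (Or.inr ⟨h.symm, by rw [hup u hux, h0]⟩))
      rcases hv with hv | hv | hv
      · refine I.sealW u t' hgu hlu huW' huy (fun v hv => ?_) hty0' ?_ v hv huv
        · rw [heq v (Or.inl hv), hup v (hWx v hv)]
        · intro v hv w hw hwu hvw
          by_cases hwK : w ∈ W ∪ K
          · rw [heq v (Or.inl hv), heq w hwK]
            exact clW v hv w hw hvw
          · exact hcl' v (Or.inl hv) w hwK hwu hvw
      · subst hv; exact hK huv
      · exact hK (cl2 C hgu hlu huv (by rw [heq v (Or.inr (Or.inr hv)), hv.2]) hv.1.symm hty0'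
          huy.symm))
  exact ⟨_, _, _, hI, fun v hv => Or.inl (Or.inl (Or.inl hv)), z,
    Or.inl (Or.inr ⟨hzy.ne, Reachable.refl _⟩), hCW z hcz⟩

lemma no_inv (C : Ctx G side) : ∀ (n : ℕ) (y : V) (t : V → Bool) (W : Set V),
    (univ.filter (fun v => v ∉ W)).card ≤ n → Inv G side y t W → False := by
  intro n
  induction n with
  | zero =>
    intro y t W hn I
    have : y ∈ univ.filter (fun v => v ∉ W) := by simp [I.yW]
    rw [card_eq_zero.1 (Nat.le_zero.1 hn)] at this
    simp at this
  | succ n ih =>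
    intro y t W hn I
    obtain ⟨y1, t1, W1, I1, hW, z, hz1, hz⟩ := step C I
    refine ih y1 t1 W1 ?_ I1
    have : (univ.filter (fun v => v ∉ W1)).card < (univ.filter (fun v => v ∉ W)).card := by
      apply card_lt_card
      rw [Finset.ssubset_iff_of_subset]
      · exact ⟨z, by simp [hz], by simp [hz1]⟩
      · intro v hv
        simp only [mem_filter, mem_univ, true_and] at hv ⊢
        exact fun h => hv (hW h)
    omega

lemma never_dis (C : Ctx G side) {t : V → Bool} {z y : V} (hgz : Good G side z t)
    (hgy : Good G side y t) (hlz : Low G side z) (hly : Low G side y) (htz : t z = false)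
    (hty : t y = false) (hzy : G.Adj z y) : ¬ Dis G t z y := by
  intro hD
  exact no_inv C _ _ _ _ le_rfl (step_core C hgz hgy hlz hly htz hty hzy hD ∅ (by simp) (by simp)
    (by simp) (by simp))

end

end OreBrooks


open SimpleGraph
set_option linter.unusedSectionVars false

namespace OreBrooks

section
open scoped Classical
open Finset

variable {V : Type*} [Fintype V] {α : Type*} [Fintype α]
variable {G : SimpleGraph V} {side : α → Bool}

lemma ex_good (h : ∃ x t, St G side x t) : ∃ x t, Good G side x t := by
  have hP : ∃ n, ∃ x t, St G side x t ∧ mm G x t = n := by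
    obtain ⟨x, t, h⟩ := h
    exact ⟨_, x, t, h, rfl⟩
  obtain ⟨x, t, hs, hm⟩ := Nat.find_spec hP
  refine ⟨x, t, hs, fun y t' h' => ?_⟩
  rw [hm]
  exact Nat.find_min' hP ⟨y, t', h', rfl⟩

lemma ex_good_low (C : Ctx G side) (h : ∃ x t, St G side x t) :
    ∃ x t, Good G side x t ∧ Low G side x ∧ t x = false := by
  obtain ⟨x, t, hg⟩ := ex_good h
  by_cases hl : Low G side x
  · exact ⟨x, _, Good_upd hg false, hl, by simp⟩
  · have h1 := rk_le C.nc hg.1 true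
    have h2 := rk_le C.nc hg.1 false
    have h3 := nb_add G t x
    have h4 := C.bd x
    have h5 := C.r1
    have h6 := C.r2
    have : ∃ i, (nb G t x i).card = rk side i := by
      by_cases h7 : (nb G t x true).card = rk side true
      · exact ⟨true, h7⟩
      · exact ⟨false, by omega⟩
    obtain ⟨i, hi⟩ := this
    have hpos : 0 < (nb G t x i).card := by
      cases i <;> omega
    obtain ⟨w, hw⟩ := card_pos.1 hpos
    rw [mem_nb] at hw
    have e : nb G (Function.update t x i) x i = nb G t x i := by
      ext v
      rw [mem_nb, mem_nb]
      refine and_congr_right fun hv => ?_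
      rw [Function.update_of_ne hv.ne']
    have hs := Good_swap C.nc (Good_upd hg i) (by
      rw [dg, Function.update_self, e, hi]) hw.1 (by
      rw [Function.update_self, Function.update_of_ne hw.1.ne', hw.2])
    exact ⟨w, _, Good_upd hs.1 false, (C.ind x w hw.1).resolve_left hl, by simp⟩

lemma rk_card (side : α → Bool) : rk side true + rk side false = Fintype.card α := by
  unfold rk
  rw [← card_union_of_disjoint]
  · rw [← card_univ]
    congr 1
    ext j
    simp only [mem_union, mem_filter, mem_univ, true_and, iff_true]
    cases side j <;> simp
  · rw [Finset.disjoint_left]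
    intro w h1 h2
    simp only [mem_filter, mem_univ, true_and] at h1 h2
    rw [h1] at h2
    simp at h2

/-- all neighbours of a vertex with few possible neighbours -/
lemma nbrs_in {v : V} (S : Finset V) (hS : ∀ w ∈ S, G.Adj v w) (hc : dd G v ≤ S.card) {w : V}
    (hw : G.Adj v w) : w ∈ S := by
  have : S = univ.filter (fun w => G.Adj v w) := by
    apply eq_of_subset_of_card_le
    · intro w hw
      simpa using hS w hw
    · exact hc
  rw [this]
  simpa using hw

lemma out_le {v : V} (S Q : Finset V) (hS : ∀ w ∈ S, G.Adj v w) (hSQ : S ⊆ Q) :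
    (univ.filter (fun w => G.Adj v w ∧ w ∉ Q)).card + S.card ≤ dd G v := by
  rw [dd, ← card_union_of_disjoint]
  · apply card_le_card
    intro w hw
    simp only [mem_union, mem_filter, mem_univ, true_and] at hw ⊢
    rcases hw with h | h
    · exact h.1
    · exact hS w h
  · rw [Finset.disjoint_left]
    intro w h1 h2
    simp only [mem_filter, mem_univ, true_and] at h1
    exact h1.2 (hSQ h2)

set_option maxHeartbeats 1000000 in
lemma main_clique (C : Ctx G side) (h : ∃ x t, St G side x t) :
    ∃ s : Finset V, G.IsNClique (rk side true + 3) s := by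
  obtain ⟨x, t, hgx, hlx, htx⟩ := ex_good_low C h
  obtain ⟨z, y, hcz, hcy, hzy, hlz, hly⟩ := adj_lows C hgx htx
  have hgz := good_comp C hgx hlx hcz
  have hgy := good_comp C hgx hlx hcy
  have htz : t z = false := by rw [t_reach hcz, htx]
  have hty : t y = false := by rw [t_reach hcy, htx]
  have hD := never_dis C hgz hgy hlz hly htz hty hzy
  obtain ⟨q, hzq, hyq, htq, hqb⟩ := long C hgz hlz hly htz hty hzy hD
  have hTy := fun b => @not_dis V _ α _ G side C t z y hgz hgy hlz hly htz hty hD b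
  set T := nb G t z true with hT
  have hTc : T.card = rk side true := nb_low C.nc hgz.1 hlz true
  have hTcl : ∀ a ∈ T, ∀ b ∈ T, a ≠ b → G.Adj a b := by
    intro a ha b hb hab
    rw [hT, mem_nb] at ha hb
    exact cl1 C hgz hlz ha.1 ha.2 hb.1 hb.2 hab
  have hTz : ∀ b ∈ T, G.Adj z b := fun b hb => (mem_nb.1 hb).1
  have hTt : ∀ b ∈ T, t b = true := fun b hb => (mem_nb.1 hb).2
  have hTy' : ∀ b ∈ T, G.Adj y b := fun b hb => hTy b (hTt b hb) (hTz b hb)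
  have hTq : ∀ b ∈ T, Low G side b → G.Adj q b := fun b hb hl => hqb b (hTt b hb) (hTz b hb) hl
  have hnT : ∀ v, t v = false → v ∉ T := by
    intro v hv h
    rw [hTt v h] at hv
    simp at hv
  by_cases hall : ∀ b ∈ T, G.Adj q b
  · have h0 : G.IsNClique (rk side true) T := by
      refine ⟨?_, hTc⟩
      intro a ha b hb hab
      exact hTcl a ha b hb hab
    have h1 := h0.insert hall
    have h2 := h1.insert (a := y) (by
      intro b hb
      rw [mem_insert] at hb
      rcases hb with rfl | hb
      · exact hyq
      · exact hTy' b hb)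
    have h3 := h2.insert (a := z) (by
      intro b hb
      rw [mem_insert, mem_insert] at hb
      rcases hb with rfl | rfl | hb
      · exact hzy
      · exact hzq
      · exact hTz b hb)
    exact ⟨_, h3⟩
  · exfalso
    push Not at hall
    obtain ⟨h, hhT, hqh⟩ := hall
    have hhl : ¬ Low G side h := fun hl => hqh (hTq h hhT hl)
    have hlow : ∀ b ∈ T, b ≠ h → Low G side b := fun b hb hbh =>
      (C.ind b h (hTcl b hb h hhT hbh)).resolve_right hhl
    set Q' : Finset V := insert z (insert y (T.erase h)) with hQ'
    have hyE : y ∉ T.erase h := fun hh => hnT y hty (mem_of_mem_erase hh)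
    have hzE : z ∉ insert y (T.erase h) := by
      rw [mem_insert]
      rintro (hh | hh)
      · exact hzy.ne hh
      · exact hnT z htz (mem_of_mem_erase hh)
    have hQc : Q'.card = rk side true + 1 := by
      have := C.r2
      rw [hQ', card_insert_of_notMem hzE, card_insert_of_notMem hyE, card_erase_of_mem hhT, hTc]
      omega
    have hhq : h ≠ q := by rintro rfl; exact hnT h htq hhT
    have mQ : ∀ v, v ∈ Q' ↔ v = z ∨ v = y ∨ (v ≠ h ∧ v ∈ T) := by
      intro v
      rw [hQ', mem_insert, mem_insert, mem_erase]
    have hhQ : h ∉ Q' := by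
      rw [mQ]
      rintro (rfl | rfl | hh)
      · exact hnT _ htz hhT
      · exact hnT _ hty hhT
      · exact hh.1 rfl
    have hqQ : q ∉ Q' := by
      rw [mQ]
      rintro (rfl | rfl | hh)
      · exact G.loopless.irrefl _ hzq
      · exact G.loopless.irrefl _ hyq
      · exact hnT _ htq hh.2
    -- adjacency
    have hadjh : ∀ v ∈ Q', G.Adj h v := by
      intro v hv
      rw [mQ] at hv
      rcases hv with rfl | rfl | hv
      · exact (hTz h hhT).symm
      · exact (hTy' h hhT).symm
      · exact hTcl h hhT v hv.2 hv.1.symm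
    have hadjq : ∀ v ∈ Q', G.Adj q v := by
      intro v hv
      rw [mQ] at hv
      rcases hv with rfl | rfl | hv
      · exact hzq.symm
      · exact hyq.symm
      · exact hTq v hv.2 (hlow v hv.2 hv.1)
    have hadjQ : ∀ v ∈ Q', ∀ w ∈ Q', v ≠ w → G.Adj v w := by
      intro v hv w hw hvw
      rw [mQ] at hv hw
      rcases hv with rfl | rfl | hv
      · rcases hw with rfl | rfl | hw
        · exact absurd rfl hvw
        · exact hzy
        · exact hTz w hw.2
      · rcases hw with rfl | rfl | hw
        · exact hzy.symm
        · exact absurd rfl hvw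
        · exact hTy' w hw.2
      · rcases hw with rfl | rfl | hw
        · exact (hTz v hv.2).symm
        · exact (hTy' v hv.2).symm
        · exact hTcl v hv.2 w hw.2 hvw
    have hlQ : ∀ v ∈ Q', Low G side v := by
      intro v hv
      rw [mQ] at hv
      rcases hv with rfl | rfl | hv
      · exact hlz
      · exact hly
      · exact hlow v hv.2 hv.1
    set Q : Finset V := insert h (insert q Q') with hQ
    have hclosed : ∀ v ∈ Q', ∀ w, G.Adj v w → w ∈ Q := by
      intro v hv w hvw
      have hc : (insert h (insert q (Q'.erase v))).card = rk side true + 2 := by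
        rw [card_insert_of_notMem, card_insert_of_notMem, card_erase_of_mem hv, hQc]
        · omega
        · exact fun hh => hqQ (mem_of_mem_erase hh)
        · rw [mem_insert]
          rintro (hh | hh)
          · exact hhq hh
          · exact hhQ (mem_of_mem_erase hh)
      have := nbrs_in (G := G) (v := v) (insert h (insert q (Q'.erase v))) (by
        intro w hw
        rw [mem_insert, mem_insert, mem_erase] at hw
        rcases hw with rfl | rfl | hw
        · exact (hadjh v hv).symm
        · exact (hadjq v hv).symm
        · exact hadjQ v hv w hw.2 hw.1.symm) (by
        rw [hc, ← C.r1]; exact hlQ v hv) hvw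
      rw [mem_insert, mem_insert, mem_erase] at this
      rw [hQ, mem_insert, mem_insert]
      tauto
    have hQ'Q : Q' ⊆ Q := fun v hv => mem_insert_of_mem (mem_insert_of_mem hv)
    have oh := out_le (G := G) (v := h) Q' Q hadjh hQ'Q
    have oq := out_le (G := G) (v := q) Q' Q hadjq hQ'Q
    have bh := C.bd h
    have bq := C.bd q
    obtain ⟨c, hc, -⟩ := hgz.1
    set F := ((univ.filter (fun w => G.Adj h w ∧ w ∉ Q)) ∪
      (univ.filter (fun w => G.Adj q w ∧ w ∉ Q))).image c with hF
    have hFc : F.card ≤ 4 := by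
      refine card_image_le.trans ((card_union_le _ _).trans ?_)
      omega
    have hα := rk_card side
    obtain ⟨j, hj⟩ : ∃ j, j ∉ F := by
      by_contra! hcon
      have : F = univ := eq_univ_iff_forall.2 hcon
      rw [this, card_univ] at hFc
      have := C.r1
      have := C.r2
      omega
    have hjF : ∀ a w, (a = h ∨ a = q) → G.Adj a w → w ∉ Q → c w ≠ j := by
      rintro a w ha haw hw rfl
      apply hj
      rw [hF, mem_image]
      refine ⟨w, ?_, rfl⟩
      simp only [mem_union, mem_filter, mem_univ, true_and]
      rcases ha with rfl | rfl
      · exact Or.inl ⟨haw, hw⟩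
      · exact Or.inr ⟨haw, hw⟩
    obtain ⟨f⟩ : Nonempty ({v // v ∈ Q'} ↪ {i : α // i ≠ j}) := by
      apply Function.Embedding.nonempty_of_card_le
      rw [Fintype.card_coe, hQc, Fintype.card_subtype_compl, Fintype.card_subtype_eq]
      have := C.r1
      omega
    let c' : V → α := fun v => if v = h ∨ v = q then j else
      if hv : v ∈ Q' then (f ⟨v, hv⟩).1 else c v
    have cA : ∀ v, (v = h ∨ v = q) → c' v = j := fun v hv => if_pos hv
    have nA : ∀ v, v ∈ Q' → ¬ (v = h ∨ v = q) := by
      rintro v hv (rfl | rfl)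
      · exact hhQ hv
      · exact hqQ hv
    have cB : ∀ v (hv : v ∈ Q'), c' v = (f ⟨v, hv⟩).1 := by
      intro v hv
      simp only [c']
      rw [if_neg (nA v hv), dif_pos hv]
    have cO : ∀ v, v ∉ Q → c' v = c v := by
      intro v hv
      rw [hQ, mem_insert, mem_insert] at hv
      push Not at hv
      simp only [c']
      rw [if_neg (by rintro (hh | hh); exacts [hv.1 hh, hv.2.1 hh]), dif_neg hv.2.2]
    have tri : ∀ v, (v = h ∨ v = q) ∨ v ∈ Q' ∨ v ∉ Q := by
      intro v
      by_cases hv : v ∈ Q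
      · rcases mem_insert.1 hv with hv | hv
        · exact Or.inl (Or.inl hv)
        · rcases mem_insert.1 hv with hv | hv
          · exact Or.inl (Or.inr hv)
          · exact Or.inr (Or.inl hv)
      · exact Or.inr (Or.inr hv)
    have hA : ∀ a b, G.Adj a b → (a = h ∨ a = q) → c' a ≠ c' b := by
      intro a b hab ha he
      rw [cA a ha] at he
      rcases tri b with hb | hb | hb
      · rcases ha with rfl | rfl <;> rcases hb with rfl | rfl
        · exact G.loopless.irrefl _ hab
        · exact hqh hab.symm
        · exact hqh hab
        · exact G.loopless.irrefl _ hab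
      · rw [cB b hb] at he
        exact (f ⟨b, hb⟩).2 he.symm
      · rw [cO b hb] at he
        exact hjF a b ha hab hb he.symm
    have hB : ∀ a b, G.Adj a b → a ∈ Q' → c' a ≠ c' b := by
      intro a b hab ha he
      rcases tri b with hb | hb | hb
      · exact hA b a hab.symm hb he.symm
      · rw [cB a ha, cB b hb] at he
        have := f.injective (Subtype.ext he)
        exact hab.ne (congrArg Subtype.val this)
      · exact hb (hclosed a ha b hab)
    obtain ⟨a, b, hab, he⟩ := C.nc c'
    rcases tri a with ha | ha | ha
    · exact hA a b hab ha he
    · exact hB a b hab ha he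
    · rcases tri b with hb | hb | hb
      · exact hA b a hab.symm hb he.symm
      · exact hB b a hab.symm hb he.symm
      · rw [cO a ha, cO b hb] at he
        have hzQ : z ∈ Q := hQ'Q ((mQ z).2 (Or.inl rfl))
        refine hc a b hab ?_ ?_ he
        · rintro rfl; exact ha hzQ
        · rintro rfl; exact hb hzQ

lemma dd_mono {H G : SimpleGraph V} (h : H ≤ G) (v : V) : dd H v ≤ dd G v := by
  refine dd_le _ (fun w hw => ?_)
  simpa using h hw

lemma final (G : SimpleGraph V) (k : ℕ) (h6 : 6 ≤ k)
    (hub : ∀ x y, G.Adj x y → dd G x + dd G y ≤ 2 * k - 1) (hnc : NC G (Fin (k - 1))) :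
    ∃ s : Finset V, G.IsNClique k s := by
  obtain ⟨H, hHle, hHnc⟩ : ∃ H, H ≤ G ∧ Minimal (fun H : SimpleGraph V => NC H (Fin (k - 1))) H :=
    exists_minimal_le_of_wellFoundedLT (fun H : SimpleGraph V => NC H (Fin (k - 1))) G hnc
  have hub' : ∀ x y, H.Adj x y → dd H x + dd H y ≤ 2 * k - 1 := fun x y h =>
    (Nat.add_le_add (dd_mono hHle x) (dd_mono hHle y)).trans (hub x y (hHle h))
  let side : Fin (k - 1) → Bool := fun i => decide (2 ≤ i.1)
  have hα := rk_card side
  rw [Fintype.card_fin] at hα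
  have r1 : rk side false = 2 := by
    unfold rk
    have : univ.filter (fun j => side j = false) =
        {(⟨0, by omega⟩ : Fin (k - 1)), ⟨1, by omega⟩} := by
      ext j
      simp only [side, mem_filter, mem_univ, true_and, decide_eq_false_iff_not, mem_insert,
        mem_singleton, Fin.ext_iff]
      omega
    rw [this, card_pair]
    simp [Fin.ext_iff]
  have hst : ∀ x w, H.Adj x w → ∃ t, St H side x t := by
    intro x w hxw
    let H' : SimpleGraph V :=
      { Adj := fun a b => H.Adj a b ∧ a ≠ x ∧ b ≠ x
        symm := ⟨fun a b h => ⟨h.1.symm, h.2.2, h.2.1⟩⟩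
        loopless := ⟨fun _ h => H.loopless.irrefl _ h.1⟩ }
    have hle : H' ≤ H := fun a b h => h.1
    have hn : ¬ NC H' (Fin (k - 1)) := by
      intro hn
      exact (hHnc.2 hn hle hxw).2.1 rfl
    unfold NC at hn
    push Not at hn
    obtain ⟨c, hc⟩ := hn
    exact ⟨fun v => side (c v), c, fun a b hab ha hb => hc a b ⟨hab, ha, hb⟩, fun v _ => rfl⟩
  have hlb : ∀ x w, H.Adj x w → k - 1 ≤ dd H x := by
    intro x w hxw
    obtain ⟨t, ht⟩ := hst x w hxw
    have h1 := rk_le hHnc.1 ht true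
    have h2 := rk_le hHnc.1 ht false
    have h3 := nb_add H t x
    omega
  have C : Ctx H side := by
    refine ⟨hHnc.1, r1, by omega, ?_, ?_⟩
    · intro a b hab
      have := hub' a b hab
      unfold Low
      rw [hα]
      have := hlb a b hab
      omega
    · intro v
      by_cases hv : ∃ w, H.Adj v w
      · obtain ⟨w, hw⟩ := hv
        have := hub' v w hw
        have := hlb w v hw.symm
        omega
      · push Not at hv
        have := dd_le (G := H) (v := v) ∅ (fun w hw => absurd hw (hv w))
        rw [card_empty] at this
        omega
  obtain ⟨a, b, hab, -⟩ := hHnc.1 (fun _ => ⟨0, by omega⟩)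
  obtain ⟨t, ht⟩ := hst a b hab
  obtain ⟨s, hs⟩ := main_clique C ⟨a, t, ht⟩
  refine ⟨s, ?_⟩
  have : rk side true + 3 = k := by omega
  rw [this] at hs
  exact hs.mono hHle

end

end OreBrooks

theorem stmt_2 {V : Type*} [Fintype V] [DecidableEq V] (G : SimpleGraph V)
    [DecidableRel G.Adj] (k θ : ℕ)
    (hθub : ∀ x y : V, G.Adj x y → G.degree x + G.degree y ≤ θ)
    (hθmax : ∃ x y : V, G.Adj x y ∧ G.degree x + G.degree y = θ)
    (hk : G.chromaticNumber = k)
    (h6 : 6 ≤ k) (hkθ : k = θ / 2 + 1) :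
    ∃ s : Finset V, G.IsNClique k s := by
  have hdd : ∀ v, OreBrooks.dd G v = G.degree v := by
    intro v
    unfold OreBrooks.dd
    rw [← SimpleGraph.card_neighborFinset_eq_degree]
    congr 1
    ext w
    simp
  refine OreBrooks.final G k h6 ?_ ?_
  · intro x y hxy
    have := hθub x y hxy
    rw [hdd, hdd]
    omega
  · intro c
    by_contra! hcon
    have hcol : G.Colorable (k - 1) := ⟨Coloring.mk c (fun {a b} h => hcon a b h)⟩
    have := hcol.chromaticNumber_le
    rw [hk] at this
    have h2 : k ≤ k - 1 := by exact_mod_cast this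
    omega
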